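/- Let (H,A,C) be a Doi-Hopf datum. If θ, θ' ∈ V_3, then the map θ•θ' defined by (θ•θ')(c⊗d) = Σ θ(c_(3)⊗d)·θ'(c_(1)⊗c_(2)) again lies in V_3; the operation • is associative on V_3; and if θ' is normalized then θ•θ' = θ, so normalized elements of V_3 are right units (and in particular idempotents) for •. -/

import Mathlib

/-!
Everything is expressed through `m_θ : C → A`, `m_θ(c) = Σ θ(c_(1) ⊗ c_(2))`: by definition
`(θ • θ')(c ⊗ d) = Σ θ(c_(2) ⊗ d) m_θ'(c_(1))`.

Conditions (a) and (b) for `θ` specialize to `m_θ(c) a = Σ a_{<0>} m_θ(c·a_{<-1>})`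
(`IsV3.trace_mul`) and `Σ c_(1) ⊗ m_θ(c_(2)) = Σ c_(2)·m_θ(c_(1))_{<-1>} ⊗ m_θ(c_(1))_{<0>}`
(`IsV3.trace_b`).

Condition (a) for `θ • θ'` follows by moving `a` first past `m_θ'(c_(1))` and then past
`θ(c_(2) ⊗ d)`, and collecting the factors with coassociativity of `ρ` and compatibility of the
action with `Δ`. For condition (b), `trace_b` for `θ'` turns the left side
`Σ c_(1) ⊗ θ(c_(3) ⊗ d) m_θ'(c_(2))` into
`Σ c_(2)·m_θ'(c_(1))_{<-1>} ⊗ θ(c_(3) ⊗ d) m_θ'(c_(1))_{<0>}`, and condition (b) for `θ` together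
with multiplicativity of `ρ` identifies this with the right side.

Associativity is coassociativity of `Δ`, since `m_{θ • θ'}(c) = Σ m_θ(c_(2)) m_θ'(c_(1))`. If `θ'`
is normalized then `m_θ' = ε`, and the unit law is the counit axiom.

Equalities in Sweedler notation are proved by writing both sides as linear maps evaluated at the
same tensor and checking them on pure tensors.
-/

open TensorProduct

noncomputable section

/-- A Doi-Hopf datum `(H, A, C)`: `H` is a `k`-bialgebra, `A` is a left `H`-comodule
algebra (with coaction `ρ`), and `C` is a right `H`-module coalgebra (with action `act`). -/
structure DoiHopfDatum (k H A C : Type*) [CommRing k] [Ring H] [Bialgebra k H]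
    [Ring A] [Algebra k A] [AddCommGroup C] [Module k C] [Coalgebra k C] where
  /-- the coaction `ρ_A : A → H ⊗ A`, `ρ a = Σ a_{<-1>} ⊗ a_{<0>}` -/
  ρ : A →ₗ[k] H ⊗[k] A
  ρ_coassoc : ∀ a : A,
    (TensorProduct.assoc k H H A)
        ((TensorProduct.map (Coalgebra.comul (R := k)) LinearMap.id) (ρ a))
      = (TensorProduct.map LinearMap.id ρ) (ρ a)
  ρ_counit : ∀ a : A,
    (TensorProduct.lid k A)
        ((TensorProduct.map (Coalgebra.counit (R := k)) LinearMap.id) (ρ a)) = a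
  ρ_mul : ∀ a b : A, ρ (a * b) = ρ a * ρ b
  ρ_one : ρ 1 = 1
  /-- the right `H`-action on `C`, written `act c h = c · h` -/
  act : C →ₗ[k] H →ₗ[k] C
  act_one : ∀ c : C, act c 1 = c
  act_mul : ∀ (c : C) (g h : H), act (act c g) h = act c (g * h)
  comul_act : ∀ (c : C) (h : H),
    Coalgebra.comul (R := k) (act c h)
      = (TensorProduct.map (TensorProduct.lift act) (TensorProduct.lift act))
          ((TensorProduct.tensorTensorTensorComm k C C H H)
            (Coalgebra.comul (R := k) c ⊗ₜ[k] Coalgebra.comul (R := k) h))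
  counit_act : ∀ (c : C) (h : H),
    Coalgebra.counit (R := k) (act c h)
      = Coalgebra.counit (R := k) c * Coalgebra.counit (R := k) h

namespace DoiHopfDatum

variable {k H A C : Type*} [CommRing k] [Ring H] [Bialgebra k H]
    [Ring A] [Algebra k A] [AddCommGroup C] [Module k C] [Coalgebra k C]
variable (D : DoiHopfDatum k H A C)

/-- The action `C ⊗ H → C` as a linear map on the tensor product. -/
def actL : C ⊗[k] H →ₗ[k] C := TensorProduct.lift D.act

/-- The iterated coaction `a ↦ Σ (a_{<-2>} ⊗ a_{<-1>}) ⊗ a_{<0>}`. -/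
def ρ2 : A →ₗ[k] (H ⊗[k] H) ⊗[k] A :=
  (TensorProduct.assoc k H H A).symm.toLinearMap ∘ₗ
    (TensorProduct.map LinearMap.id D.ρ) ∘ₗ D.ρ

/-- The simultaneous action of `H ⊗ H` on `C ⊗ C`. -/
def act2 : (C ⊗[k] C) ⊗[k] (H ⊗[k] H) →ₗ[k] C ⊗[k] C :=
  (TensorProduct.map D.actL D.actL) ∘ₗ
    (TensorProduct.tensorTensorTensorComm k C C H H).toLinearMap

/-- The right `A`-action on `C ⊗ A`: `(c ⊗ b) · a = Σ c·a_{<-1>} ⊗ b·a_{<0>}`. -/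
def rActCA : (C ⊗[k] A) ⊗[k] A →ₗ[k] C ⊗[k] A :=
  (TensorProduct.map D.actL (LinearMap.mul' k A)) ∘ₗ
    (TensorProduct.tensorTensorTensorComm k C A H A).toLinearMap ∘ₗ
    (TensorProduct.map LinearMap.id D.ρ)

/-- The right-hand side of condition (a) of `V₃`:
`(c ⊗ d) ⊗ a ↦ Σ a_{<0>} * θ(c·a_{<-2>} ⊗ d·a_{<-1>})`. -/
def V3aRHS (θ : C ⊗[k] C →ₗ[k] A) : (C ⊗[k] C) ⊗[k] A →ₗ[k] A :=
  (LinearMap.mul' k A) ∘ₗ (TensorProduct.comm k A A).toLinearMap ∘ₗ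
    (TensorProduct.map θ LinearMap.id) ∘ₗ
    (TensorProduct.map D.act2 LinearMap.id) ∘ₗ
    (TensorProduct.assoc k (C ⊗[k] C) (H ⊗[k] H) A).symm.toLinearMap ∘ₗ
    (TensorProduct.map LinearMap.id D.ρ2)

/-- The left-hand side of condition (b) of `V₃`: `c ⊗ d ↦ Σ c_(1) ⊗ θ(c_(2) ⊗ d)`. -/
def V3bLHS (_D : DoiHopfDatum k H A C) (θ : C ⊗[k] C →ₗ[k] A) : C ⊗[k] C →ₗ[k] C ⊗[k] A :=
  (TensorProduct.map LinearMap.id θ) ∘ₗ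
    (TensorProduct.assoc k C C C).toLinearMap ∘ₗ
    (TensorProduct.map (Coalgebra.comul (R := k)) LinearMap.id)

/-- The right-hand side of condition (b) of `V₃`:
`c ⊗ d ↦ Σ d_(2)·θ(c ⊗ d_(1))_{<-1>} ⊗ θ(c ⊗ d_(1))_{<0>}`. -/
def V3bRHS (θ : C ⊗[k] C →ₗ[k] A) : C ⊗[k] C →ₗ[k] C ⊗[k] A :=
  (TensorProduct.map D.actL LinearMap.id) ∘ₗ
    (TensorProduct.assoc k C H A).symm.toLinearMap ∘ₗ
    (TensorProduct.comm k (H ⊗[k] A) C).toLinearMap ∘ₗ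
    (TensorProduct.map D.ρ LinearMap.id) ∘ₗ
    (TensorProduct.map θ LinearMap.id) ∘ₗ
    (TensorProduct.assoc k C C C).symm.toLinearMap ∘ₗ
    (TensorProduct.map LinearMap.id (Coalgebra.comul (R := k)))

/-- `θ : C ⊗ C → A` belongs to `V₃`. -/
def IsV3 (θ : C ⊗[k] C →ₗ[k] A) : Prop :=
  (∀ (c d : C) (a : A), θ (c ⊗ₜ[k] d) * a = D.V3aRHS θ ((c ⊗ₜ[k] d) ⊗ₜ[k] a)) ∧
    D.V3bLHS θ = D.V3bRHS θ

/-- `θ` is normalized: `Σ θ(c_(1) ⊗ c_(2)) = ε(c)1_A`. -/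
def IsNormalizedV3 (_D : DoiHopfDatum k H A C) (θ : C ⊗[k] C →ₗ[k] A) : Prop :=
  ∀ c : C, θ (Coalgebra.comul (R := k) c)
    = algebraMap k A (Coalgebra.counit (R := k) c)

/-- An `A`-integral `γ : C → Hom(C,A)` for the Doi-Hopf datum: its uncurried form
lies in `V₃`. -/
def IsAIntegral (γ : C →ₗ[k] (C →ₗ[k] A)) : Prop :=
  D.IsV3 (TensorProduct.lift γ)

/-- A total `A`-integral: a normalized `A`-integral. -/
def IsTotalAIntegral (γ : C →ₗ[k] (C →ₗ[k] A)) : Prop :=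
  D.IsAIntegral γ ∧ D.IsNormalizedV3 (TensorProduct.lift γ)

end DoiHopfDatum

/-- A right-left Doi-Hopf module over the Doi-Hopf datum `D`: a right `A`-module and
left `C`-comodule `M` satisfying `ρ_M(m·a) = Σ m_{<-1>}·a_{<-1>} ⊗ m_{<0>}·a_{<0>}`. -/
structure DHModule {k H A C : Type*} [CommRing k] [Ring H] [Bialgebra k H]
    [Ring A] [Algebra k A] [AddCommGroup C] [Module k C] [Coalgebra k C]
    (D : DoiHopfDatum k H A C) (M : Type*) [AddCommGroup M] [Module k M] where
  /-- the right `A`-action on `M` -/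
  sm : M →ₗ[k] A →ₗ[k] M
  sm_one : ∀ m : M, sm m 1 = m
  sm_mul : ∀ (m : M) (a b : A), sm (sm m a) b = sm m (a * b)
  /-- the left `C`-coaction `ρ_M : M → C ⊗ M` -/
  cρ : M →ₗ[k] C ⊗[k] M
  cρ_coassoc : ∀ m : M,
    (TensorProduct.assoc k C C M)
        ((TensorProduct.map (Coalgebra.comul (R := k)) LinearMap.id) (cρ m))
      = (TensorProduct.map LinearMap.id cρ) (cρ m)
  cρ_counit : ∀ m : M,
    (TensorProduct.lid k M)
        ((TensorProduct.map (Coalgebra.counit (R := k)) LinearMap.id) (cρ m)) = m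
  compat : ∀ (m : M) (a : A),
    cρ (sm m a)
      = (TensorProduct.map D.actL (TensorProduct.lift sm))
          ((TensorProduct.tensorTensorTensorComm k C M H A)
            (cρ m ⊗ₜ[k] D.ρ a))

namespace DoiHopfDatum

variable {k H A C : Type*} [CommRing k] [Ring H] [Bialgebra k H]
    [Ring A] [Algebra k A] [AddCommGroup C] [Module k C] [Coalgebra k C]
variable (D : DoiHopfDatum k H A C)

/-- The natural transformation attached to `θ : C ⊗ C → A`:
`ν_M (c ⊗ m) = Σ m_{<0>} · θ(c ⊗ m_{<-1>})`. -/
def nuMap (θ : C ⊗[k] C →ₗ[k] A) {M : Type*} [AddCommGroup M] [Module k M]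
    (DM : DHModule D M) : C ⊗[k] M →ₗ[k] M :=
  (TensorProduct.lift DM.sm) ∘ₗ (TensorProduct.comm k A M).toLinearMap ∘ₗ
    (TensorProduct.map θ LinearMap.id) ∘ₗ
    (TensorProduct.assoc k C C M).symm.toLinearMap ∘ₗ
    (TensorProduct.map LinearMap.id DM.cρ)

/-- The right `A`-action on `C ⊗ M`: `(c ⊗ m) · a = Σ c·a_{<-1>} ⊗ m·a_{<0>}`. -/
def actCM {M : Type*} [AddCommGroup M] [Module k M] (DM : DHModule D M) :
    (C ⊗[k] M) ⊗[k] A →ₗ[k] C ⊗[k] M :=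
  (TensorProduct.map D.actL (TensorProduct.lift DM.sm)) ∘ₗ
    (TensorProduct.tensorTensorTensorComm k C M H A).toLinearMap ∘ₗ
    (TensorProduct.map LinearMap.id D.ρ)

end DoiHopfDatum

namespace DoiHopfDatum

variable {k H A C : Type*} [CommRing k] [Ring H] [Bialgebra k H]
    [Ring A] [Algebra k A] [AddCommGroup C] [Module k C] [Coalgebra k C]

/-- The iterated comultiplication `c ↦ Σ (c_(1) ⊗ c_(2)) ⊗ c_(3)`. -/
def comul3 (_D : DoiHopfDatum k H A C) : C →ₗ[k] (C ⊗[k] C) ⊗[k] C :=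
  (TensorProduct.map (Coalgebra.comul (R := k)) LinearMap.id) ∘ₗ
    (Coalgebra.comul (R := k))

/-- The multiplication on `V₃`: `(θ • θ')(c ⊗ d) = Σ θ(c_(3) ⊗ d) * θ'(c_(1) ⊗ c_(2))`. -/
def bullet (D : DoiHopfDatum k H A C) (θ θ' : C ⊗[k] C →ₗ[k] A) :
    C ⊗[k] C →ₗ[k] A :=
  (LinearMap.mul' k A) ∘ₗ (TensorProduct.comm k A A).toLinearMap ∘ₗ
    (TensorProduct.map θ' θ) ∘ₗ
    (TensorProduct.assoc k (C ⊗[k] C) C C).toLinearMap ∘ₗ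
    (TensorProduct.map D.comul3 LinearMap.id)

end DoiHopfDatum

namespace DoiHopfDatum

variable {k H A C : Type*} [CommRing k] [Ring H] [Bialgebra k H]
    [Ring A] [Algebra k A] [AddCommGroup C] [Module k C] [Coalgebra k C]

/-! ### Sweedler-style evaluation maps -/

/-- The map `m_θ : C → A`, `c ↦ Σ θ(c_(1) ⊗ c_(2))`. -/
def trace (θ : C ⊗[k] C →ₗ[k] A) : C →ₗ[k] A := θ ∘ₗ Coalgebra.comul (R := k)

/-- The map `x ⊗ y ↦ θ(y ⊗ d) * m_θ'(x)`, whose value at `Δ c` is `(θ • θ')(c ⊗ d)`. -/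
def bulletAux (θ θ' : C ⊗[k] C →ₗ[k] A) (d : C) : C ⊗[k] C →ₗ[k] A :=
  LinearMap.mul' k A ∘ₗ (TensorProduct.comm k A A).toLinearMap ∘ₗ
    TensorProduct.map (trace θ') (θ ∘ₗ (TensorProduct.mk k C C).flip d)

@[simp]
lemma bulletAux_tmul (θ θ' : C ⊗[k] C →ₗ[k] A) (d x y : C) :
    bulletAux θ θ' d (x ⊗ₜ y) = θ (y ⊗ₜ d) * trace θ' x := by
  simp [bulletAux]

variable (D : DoiHopfDatum k H A C)

lemma bullet_tmul (θ θ' : C ⊗[k] C →ₗ[k] A) (c d : C) :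
    D.bullet θ θ' (c ⊗ₜ d) = bulletAux θ θ' d (Coalgebra.comul (R := k) c) := by
  simp only [bullet, comul3, LinearMap.comp_apply, TensorProduct.map_tmul, LinearMap.id_apply]
  induction Coalgebra.comul (R := k) c with
  | zero => simp
  | add s t hs ht => simp only [map_add, add_tmul, hs, ht]
  | tmul x y => simp [trace]

/-- The map `h ⊗ (h' ⊗ b) ↦ b * θ(c·h ⊗ d·h')`, through which condition (a) factors. -/
def evalA (θ : C ⊗[k] C →ₗ[k] A) (c d : C) : H ⊗[k] (H ⊗[k] A) →ₗ[k] A :=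
  LinearMap.mul' k A ∘ₗ (TensorProduct.comm k A A).toLinearMap ∘ₗ
    TensorProduct.map (θ ∘ₗ TensorProduct.map (D.act c) (D.act d)) LinearMap.id ∘ₗ
    (TensorProduct.assoc k H H A).symm.toLinearMap

@[simp]
lemma evalA_tmul (θ : C ⊗[k] C →ₗ[k] A) (c d : C) (h h' : H) (b : A) :
    D.evalA θ c d (h ⊗ₜ (h' ⊗ₜ b)) = b * θ (D.act c h ⊗ₜ D.act d h') := by
  simp [evalA]

lemma evalA_assoc (θ : C ⊗[k] C →ₗ[k] A) (c d : C) (u : H ⊗[k] H) (b : A) :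
    D.evalA θ c d (TensorProduct.assoc k H H A (u ⊗ₜ b))
      = b * θ (TensorProduct.map (D.act c) (D.act d) u) := by
  simp [evalA]

lemma V3aRHS_eq (θ : C ⊗[k] C →ₗ[k] A) (c d : C) (a : A) :
    D.V3aRHS θ ((c ⊗ₜ d) ⊗ₜ a)
      = D.evalA θ c d (TensorProduct.map LinearMap.id D.ρ (D.ρ a)) := by
  simp only [V3aRHS, ρ2, LinearMap.comp_apply, TensorProduct.map_tmul, LinearMap.id_apply]
  induction TensorProduct.map LinearMap.id D.ρ (D.ρ a) with
  | zero => simp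
  | add s t hs ht => simp only [map_add, tmul_add, hs, ht]
  | tmul h t =>
    induction t with
    | zero => simp
    | add s t hs ht => simp only [map_add, tmul_add, hs, ht]
    | tmul h' b => simp [act2, actL]

lemma comul_act_repr {ι : Type*} (c : C) (r : Coalgebra.Repr k c ι) (h : H) :
    Coalgebra.comul (R := k) (D.act c h)
      = ∑ i ∈ r.index, TensorProduct.map (D.act (r.left i)) (D.act (r.right i))
          (Coalgebra.comul (R := k) h) := by
  rw [D.comul_act, ← r.eq]
  induction Coalgebra.comul (R := k) h with
  | zero => simp
  | add s t hs ht => simp only [map_add, tmul_add, hs, ht, Finset.sum_add_distrib]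
  | tmul x y => simp [sum_tmul]

/-! ### Condition (a) -/

/-- The map `h ⊗ b ↦ b * m_θ(c·h)`. -/
def evalTrace (θ : C ⊗[k] C →ₗ[k] A) (c : C) : H ⊗[k] A →ₗ[k] A :=
  LinearMap.mul' k A ∘ₗ (TensorProduct.comm k A A).toLinearMap ∘ₗ
    TensorProduct.map (trace θ ∘ₗ D.act c) LinearMap.id

@[simp]
lemma evalTrace_tmul (θ : C ⊗[k] C →ₗ[k] A) (c : C) (h : H) (b : A) :
    D.evalTrace θ c (h ⊗ₜ b) = b * trace θ (D.act c h) := by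
  simp [evalTrace]

variable {D}

/-- Condition (a) descends to `m_θ`: `m_θ(c) a = Σ a_{<0>} m_θ(c·a_{<-1>})`, because the action
on `C` is compatible with comultiplication. -/
lemma IsV3.trace_mul {θ : C ⊗[k] C →ₗ[k] A} (hθ : D.IsV3 θ) (c : C) (a : A) :
    trace θ c * a = D.evalTrace θ c (D.ρ a) := by
  have r := Coalgebra.Repr.arbitrary k c
  have h1 : trace θ c * a = ∑ i ∈ r.index, D.evalA θ (r.left i) (r.right i)
      (TensorProduct.assoc k H H A
        (TensorProduct.map (Coalgebra.comul (R := k)) LinearMap.id (D.ρ a))) := by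
    simp only [D.ρ_coassoc, ← D.V3aRHS_eq, ← hθ.1]
    simp only [trace, LinearMap.comp_apply]
    rw [← r.eq, map_sum, Finset.sum_mul]
  rw [h1]
  induction D.ρ a with
  | zero => simp
  | add s t hs ht => simp only [map_add, Finset.sum_add_distrib, hs, ht]
  | tmul h b =>
    simp only [TensorProduct.map_tmul, LinearMap.id_apply, evalA_assoc, evalTrace_tmul, trace,
      LinearMap.comp_apply, D.comul_act_repr c r h, map_sum, Finset.mul_sum]

variable (D)

/-- The map `h ⊗ t ↦ evalA θ y d t * m_θ'(x·h)`, that is,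
`h ⊗ (h' ⊗ (h'' ⊗ b)) ↦ b * θ(y·h' ⊗ d·h'') * m_θ'(x·h)`. -/
def evalBullet (θ θ' : C ⊗[k] C →ₗ[k] A) (x y d : C) :
    H ⊗[k] (H ⊗[k] (H ⊗[k] A)) →ₗ[k] A :=
  LinearMap.mul' k A ∘ₗ (TensorProduct.comm k A A).toLinearMap ∘ₗ
    TensorProduct.map (trace θ' ∘ₗ D.act x) (D.evalA θ y d)

@[simp]
lemma evalBullet_tmul (θ θ' : C ⊗[k] C →ₗ[k] A) (x y d : C) (h : H) (t : H ⊗[k] (H ⊗[k] A)) :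
    D.evalBullet θ θ' x y d (h ⊗ₜ t) = D.evalA θ y d t * trace θ' (D.act x h) := by
  simp [evalBullet]

variable {D}

lemma IsV3.mul_trace_mul {θ θ' : C ⊗[k] C →ₗ[k] A} (hθ : D.IsV3 θ) (hθ' : D.IsV3 θ')
    (x y d : C) (a : A) :
    θ (y ⊗ₜ d) * trace θ' x * a
      = D.evalBullet θ θ' x y d (TensorProduct.map LinearMap.id
          (TensorProduct.map LinearMap.id D.ρ) (TensorProduct.assoc k H H A
            (TensorProduct.map (Coalgebra.comul (R := k)) LinearMap.id (D.ρ a)))) := by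
  rw [D.ρ_coassoc, mul_assoc, hθ'.trace_mul]
  induction D.ρ a with
  | zero => simp
  | add s t hs ht => simp only [map_add, mul_add, hs, ht]
  | tmul h b =>
    simp only [evalTrace_tmul, TensorProduct.map_tmul, LinearMap.id_apply, evalBullet_tmul,
      ← D.V3aRHS_eq, ← hθ.1, mul_assoc]

lemma IsV3.bullet_a {θ θ' : C ⊗[k] C →ₗ[k] A} (hθ : D.IsV3 θ) (hθ' : D.IsV3 θ')
    (c d : C) (a : A) :
    D.bullet θ θ' (c ⊗ₜ d) * a = D.V3aRHS (D.bullet θ θ') ((c ⊗ₜ d) ⊗ₜ a) := by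
  have r := Coalgebra.Repr.arbitrary k c
  rw [V3aRHS_eq, bullet_tmul, ← r.eq, map_sum, Finset.sum_mul]
  simp only [bulletAux_tmul, hθ.mul_trace_mul hθ']
  induction D.ρ a with
  | zero => simp
  | add s t hs ht => simp only [map_add, Finset.sum_add_distrib, hs, ht]
  | tmul h b =>
    have key : ∀ (u : H ⊗[k] H), TensorProduct.map LinearMap.id
        (TensorProduct.map LinearMap.id D.ρ) (TensorProduct.assoc k H H A (u ⊗ₜ b))
        = TensorProduct.assoc k H H (H ⊗[k] A) (u ⊗ₜ D.ρ b) := by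
      intro u
      induction u with
      | zero => simp
      | add s t hs ht => simp only [map_add, add_tmul, hs, ht]
      | tmul l l' => simp
    simp only [TensorProduct.map_tmul, LinearMap.id_apply, key]
    induction D.ρ b with
    | zero => simp
    | add s t hs ht => simp only [map_add, tmul_add, Finset.sum_add_distrib, hs, ht]
    | tmul h' b' =>
      simp only [evalA_tmul, bullet_tmul, D.comul_act_repr c r h, map_sum, Finset.mul_sum]
      refine Finset.sum_congr rfl fun i _ => ?_
      induction Coalgebra.comul (R := k) h with
      | zero => simp
      | add s t hs ht => simp only [map_add, add_tmul, mul_add, hs, ht]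
      | tmul l l' => simp [mul_assoc]

/-! ### Condition (b) -/

variable (D)

/-- The map `(h ⊗ a) ⊗ d ↦ d·h ⊗ a`. -/
def swapAct : (H ⊗[k] A) ⊗[k] C →ₗ[k] C ⊗[k] A :=
  TensorProduct.map D.actL LinearMap.id ∘ₗ
    (TensorProduct.assoc k C H A).symm.toLinearMap ∘ₗ
    (TensorProduct.comm k (H ⊗[k] A) C).toLinearMap

@[simp]
lemma swapAct_tmul (h : H) (a : A) (d : C) :
    D.swapAct ((h ⊗ₜ a) ⊗ₜ d) = D.act d h ⊗ₜ a := by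
  simp [swapAct, actL]

/-- Right multiplication by `ρ a` corresponds to the right action of `a` on `C ⊗ A`. -/
lemma swapAct_mul (t : H ⊗[k] A) (a : A) (d : C) :
    D.swapAct ((t * D.ρ a) ⊗ₜ d) = D.rActCA (D.swapAct (t ⊗ₜ d) ⊗ₜ a) := by
  induction t with
  | zero => simp
  | add s t hs ht => simp only [map_add, add_tmul, add_mul, hs, ht]
  | tmul h b =>
    simp only [swapAct_tmul, rActCA, LinearMap.comp_apply, TensorProduct.map_tmul,
      LinearMap.id_apply]
    induction D.ρ a with
    | zero => simp
    | add s t hs ht => simp only [map_add, add_tmul, tmul_add, mul_add, hs, ht]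
    | tmul h' b' => simp [actL, D.act_mul]

variable {D}

lemma IsV3.b_tmul {θ : C ⊗[k] C →ₗ[k] A} (hθ : D.IsV3 θ) (c d : C) :
    TensorProduct.map LinearMap.id θ
        (TensorProduct.assoc k C C C (Coalgebra.comul (R := k) c ⊗ₜ d))
      = D.swapAct (TensorProduct.map (D.ρ ∘ₗ θ) LinearMap.id
          ((TensorProduct.assoc k C C C).symm (c ⊗ₜ Coalgebra.comul (R := k) d))) := by
  have h := LinearMap.congr_fun hθ.2 (c ⊗ₜ d)
  simp only [V3bLHS, V3bRHS, LinearMap.comp_apply, TensorProduct.map_tmul, LinearMap.id_apply,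
    LinearEquiv.coe_coe] at h
  rw [h]
  simp only [swapAct, LinearMap.comp_apply, LinearEquiv.coe_coe]
  induction Coalgebra.comul (R := k) d with
  | zero => simp
  | add s t hs ht => simp only [map_add, tmul_add, hs, ht]
  | tmul x y => simp

/-- Condition (b) descends to `m_θ`:
`Σ c_(1) ⊗ m_θ(c_(2)) = Σ c_(2)·m_θ(c_(1))_{<-1>} ⊗ m_θ(c_(1))_{<0>}`. -/
lemma IsV3.trace_b {θ : C ⊗[k] C →ₗ[k] A} (hθ : D.IsV3 θ) (c : C) :
    TensorProduct.map LinearMap.id (trace θ) (Coalgebra.comul (R := k) c)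
      = D.swapAct (TensorProduct.map (D.ρ ∘ₗ trace θ) LinearMap.id
          (Coalgebra.comul (R := k) c)) := by
  have h1 : ∀ u : C ⊗[k] C, TensorProduct.map LinearMap.id (trace θ) u
      = TensorProduct.map LinearMap.id θ (Coalgebra.comul.lTensor C u) := by
    intro u
    induction u with
    | zero => simp
    | add s t hs ht => simp only [map_add, hs, ht]
    | tmul x y => simp [trace]
  have h2 : ∀ u : C ⊗[k] C, TensorProduct.map (D.ρ ∘ₗ trace θ) LinearMap.id u
      = TensorProduct.map (D.ρ ∘ₗ θ) LinearMap.id (Coalgebra.comul.rTensor C u) := by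
    intro u
    induction u with
    | zero => simp
    | add s t hs ht => simp only [map_add, hs, ht]
    | tmul x y => simp [trace]
  rw [h1, h2, ← Coalgebra.coassoc_symm_apply]
  conv_lhs => rw [← Coalgebra.coassoc_apply]
  induction Coalgebra.comul (R := k) c with
  | zero => simp
  | add s t hs ht => simp only [map_add, hs, ht]
  | tmul x y =>
    rw [LinearMap.rTensor_tmul, LinearMap.lTensor_tmul, hθ.b_tmul]

variable (D)

/-- The map `x ⊗ (z ⊗ y) ↦ Σ z·m_θ'(x)_{<-1>} ⊗ θ(y ⊗ d) m_θ'(x)_{<0>}`, given as the right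
action of `m_θ'(x)` on `z ⊗ θ(y ⊗ d)`. -/
def evalB (θ θ' : C ⊗[k] C →ₗ[k] A) (d : C) : C ⊗[k] (C ⊗[k] C) →ₗ[k] C ⊗[k] A :=
  D.rActCA ∘ₗ (TensorProduct.comm k A (C ⊗[k] A)).toLinearMap ∘ₗ
    TensorProduct.map (trace θ')
      (TensorProduct.map LinearMap.id (θ ∘ₗ (TensorProduct.mk k C C).flip d))

@[simp]
lemma evalB_tmul (θ θ' : C ⊗[k] C →ₗ[k] A) (d x : C) (u : C ⊗[k] C) :
    D.evalB θ θ' d (x ⊗ₜ u) = D.rActCA (TensorProduct.map LinearMap.id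
      (θ ∘ₗ (TensorProduct.mk k C C).flip d) u ⊗ₜ trace θ' x) := by
  simp [evalB]

lemma evalB_assoc (θ θ' : C ⊗[k] C →ₗ[k] A) (d y : C) (u : C ⊗[k] C) :
    D.evalB θ θ' d (TensorProduct.assoc k C C C (u ⊗ₜ y))
      = TensorProduct.map LinearMap.id (LinearMap.mulLeft k (θ (y ⊗ₜ d)))
          (D.swapAct (TensorProduct.map (D.ρ ∘ₗ trace θ') LinearMap.id u)) := by
  induction u with
  | zero => simp
  | add s t hs ht => simp only [map_add, add_tmul, hs, ht]
  | tmul x z =>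
    simp only [TensorProduct.assoc_tmul, evalB_tmul, TensorProduct.map_tmul, LinearMap.comp_apply,
      rActCA, LinearMap.id_apply]
    induction D.ρ (trace θ' x) with
    | zero => simp
    | add s t hs ht => simp only [map_add, add_tmul, tmul_add, hs, ht]
    | tmul h b => simp [actL]

variable {D}

lemma IsV3.bullet_b {θ θ' : C ⊗[k] C →ₗ[k] A} (hθ : D.IsV3 θ) (hθ' : D.IsV3 θ') :
    D.V3bLHS (D.bullet θ θ') = D.V3bRHS (D.bullet θ θ') := by
  refine TensorProduct.ext' fun c d => ?_
  -- both sides equal `Σ c_(2)·m_θ'(c_(1))_{<-1>} ⊗ θ(c_(3) ⊗ d) m_θ'(c_(1))_{<0>}`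
  have hL : D.V3bLHS (D.bullet θ θ') (c ⊗ₜ d) = D.evalB θ θ' d (TensorProduct.assoc k C C C
      (Coalgebra.comul.rTensor C (Coalgebra.comul (R := k) c))) := by
    have h1 : D.V3bLHS (D.bullet θ θ') (c ⊗ₜ d)
        = TensorProduct.map LinearMap.id (bulletAux θ θ' d)
            (Coalgebra.comul.lTensor C (Coalgebra.comul (R := k) c)) := by
      simp only [V3bLHS, LinearMap.comp_apply, TensorProduct.map_tmul, LinearMap.id_apply]
      induction Coalgebra.comul (R := k) c with
      | zero => simp
      | add s t hs ht => simp only [map_add, add_tmul, hs, ht]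
      | tmul x y => simp [bullet_tmul]
    rw [h1, ← Coalgebra.coassoc_apply]
    induction Coalgebra.comul (R := k) c with
    | zero => simp
    | add s t hs ht => simp only [map_add, hs, ht]
    | tmul x y =>
      rw [LinearMap.rTensor_tmul, evalB_assoc, ← hθ'.trace_b]
      induction Coalgebra.comul (R := k) x with
      | zero => simp
      | add s t hs ht => simp only [map_add, add_tmul, hs, ht]
      | tmul z w => simp
  have hR : D.V3bRHS (D.bullet θ θ') (c ⊗ₜ d) = D.evalB θ θ' d
      (Coalgebra.comul.lTensor C (Coalgebra.comul (R := k) c)) := by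
    have h0 : ∀ (u : C ⊗[k] C) , TensorProduct.map LinearMap.id
        (θ ∘ₗ (TensorProduct.mk k C C).flip d) u
        = TensorProduct.map LinearMap.id θ (TensorProduct.assoc k C C C (u ⊗ₜ d)) := by
      intro u
      induction u with
      | zero => simp
      | add s t hs ht => simp only [map_add, add_tmul, hs, ht]
      | tmul x y => simp
    have h1 : D.V3bRHS (D.bullet θ θ') (c ⊗ₜ d)
        = D.swapAct (TensorProduct.map (D.ρ ∘ₗ D.bullet θ θ') LinearMap.id
          ((TensorProduct.assoc k C C C).symm (c ⊗ₜ Coalgebra.comul (R := k) d))) := by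
      simp only [V3bRHS, swapAct, LinearMap.comp_apply, TensorProduct.map_tmul,
        LinearMap.id_apply, LinearEquiv.coe_coe]
      induction Coalgebra.comul (R := k) d with
      | zero => simp
      | add s t hs ht => simp only [map_add, tmul_add, hs, ht]
      | tmul x y => simp
    have h2 : ∀ (x y : C) (v : C ⊗[k] C),
        D.rActCA (D.swapAct (TensorProduct.map (D.ρ ∘ₗ θ) LinearMap.id
          ((TensorProduct.assoc k C C C).symm (y ⊗ₜ v))) ⊗ₜ trace θ' x)
        = D.swapAct (TensorProduct.map (D.ρ ∘ₗ LinearMap.mulRight k (trace θ' x) ∘ₗ θ)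
          LinearMap.id ((TensorProduct.assoc k C C C).symm (y ⊗ₜ v))) := by
      intro x y v
      induction v with
      | zero => simp
      | add s t hs ht => simp only [map_add, tmul_add, add_tmul, hs, ht]
      | tmul z w => simp [D.ρ_mul, swapAct_mul]
    have r := Coalgebra.Repr.arbitrary k c
    rw [h1, ← r.eq]
    simp only [map_sum, LinearMap.lTensor_tmul, evalB_tmul, h0, hθ.b_tmul, h2]
    induction Coalgebra.comul (R := k) d with
    | zero => simp
    | add s t hs ht => simp only [map_add, tmul_add, Finset.sum_add_distrib, hs, ht]
    | tmul z w =>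
      simp only [TensorProduct.assoc_symm_tmul, TensorProduct.map_tmul, LinearMap.comp_apply,
        bullet_tmul, ← r.eq, map_sum, sum_tmul, bulletAux_tmul, LinearMap.mulRight_apply]
  rw [hL, hR, Coalgebra.coassoc_apply]

/-! ### Associativity and units -/

variable (D)

/-- `m_{θ • θ'}(c) = Σ m_θ(c_(2)) m_θ'(c_(1))`. -/
lemma trace_bullet (θ θ' : C ⊗[k] C →ₗ[k] A) (c : C) :
    trace (D.bullet θ θ') c = LinearMap.mul' k A (TensorProduct.comm k A A
      (TensorProduct.map (trace θ') (trace θ) (Coalgebra.comul (R := k) c))) := by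
  have h1 : ∀ u : C ⊗[k] C, LinearMap.mul' k A (TensorProduct.comm k A A
      (TensorProduct.map (trace θ') (trace θ) u)) = LinearMap.mul' k A (TensorProduct.comm k A A
      (TensorProduct.map (trace θ') θ (Coalgebra.comul.lTensor C u))) := by
    intro u
    induction u with
    | zero => simp
    | add s t hs ht => simp only [map_add, hs, ht]
    | tmul x y => simp [trace]
  rw [h1, ← Coalgebra.coassoc_apply, trace, LinearMap.comp_apply]
  induction Coalgebra.comul (R := k) c with
  | zero => simp
  | add s t hs ht => simp only [map_add, hs, ht]
  | tmul x y =>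
    rw [bullet_tmul, LinearMap.rTensor_tmul]
    induction Coalgebra.comul (R := k) x with
    | zero => simp
    | add s t hs ht => simp only [map_add, add_tmul, hs, ht]
    | tmul z w => simp

lemma bullet_assoc (θ θ' θ'' : C ⊗[k] C →ₗ[k] A) :
    D.bullet (D.bullet θ θ') θ'' = D.bullet θ (D.bullet θ' θ'') := by
  refine TensorProduct.ext' fun c d => ?_
  -- both sides equal `Σ θ(c_(3) ⊗ d) m_θ'(c_(2)) m_θ''(c_(1))`
  let F : C ⊗[k] (C ⊗[k] C) →ₗ[k] A :=
    LinearMap.mul' k A ∘ₗ (TensorProduct.comm k A A).toLinearMap ∘ₗ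
      TensorProduct.map (trace θ'') (bulletAux θ θ' d)
  have hL : D.bullet (D.bullet θ θ') θ'' (c ⊗ₜ d)
      = F (Coalgebra.comul.lTensor C (Coalgebra.comul (R := k) c)) := by
    rw [bullet_tmul]
    induction Coalgebra.comul (R := k) c with
    | zero => simp
    | add s t hs ht => simp only [map_add, hs, ht]
    | tmul x y => simp [F, bullet_tmul]
  have hR : D.bullet θ (D.bullet θ' θ'') (c ⊗ₜ d)
      = F (TensorProduct.assoc k C C C
          (Coalgebra.comul.rTensor C (Coalgebra.comul (R := k) c))) := by
    rw [bullet_tmul]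
    induction Coalgebra.comul (R := k) c with
    | zero => simp
    | add s t hs ht => simp only [map_add, hs, ht]
    | tmul x y =>
      rw [bulletAux_tmul, trace_bullet, LinearMap.rTensor_tmul]
      induction Coalgebra.comul (R := k) x with
      | zero => simp
      | add s t hs ht => simp only [map_add, add_tmul, mul_add, hs, ht]
      | tmul z w => simp [F, mul_assoc]
  rw [hL, hR, Coalgebra.coassoc_apply]

lemma bullet_of_normalized (θ θ' : C ⊗[k] C →ₗ[k] A) (h : D.IsNormalizedV3 θ') :
    D.bullet θ θ' = θ := by
  refine TensorProduct.ext' fun c d => ?_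
  have h1 : ∀ u : C ⊗[k] C, bulletAux θ θ' d u
      = θ (TensorProduct.lid k C (Coalgebra.counit.rTensor C u) ⊗ₜ d) := by
    intro u
    induction u with
    | zero => simp
    | add s t hs ht => simp only [map_add, add_tmul, hs, ht]
    | tmul x y =>
      have hx : trace θ' x = algebraMap k A (Coalgebra.counit (R := k) x) := h x
      simp [hx, ← Algebra.commutes, ← Algebra.smul_def, ← smul_tmul']
  rw [bullet_tmul, h1, Coalgebra.rTensor_counit_comul]
  simp

end DoiHopfDatum

/-- for `θ, θ' ∈ V₃` the product
`(θ • θ')(c ⊗ d) = Σ θ(c_(3) ⊗ d)·θ'(c_(1) ⊗ c_(2))` again lies in `V₃`; `•` is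
associative on `V₃`; and normalized elements of `V₃` are right units for `•`
(in particular they are idempotents). -/
theorem bullet_V3_closed_assoc_right_units
    {k H A C : Type*} [CommRing k] [Ring H] [Bialgebra k H]
    [Ring A] [Algebra k A] [AddCommGroup C] [Module k C] [Coalgebra k C]
    (D : DoiHopfDatum k H A C) :
    (∀ θ θ' : C ⊗[k] C →ₗ[k] A, D.IsV3 θ → D.IsV3 θ' → D.IsV3 (D.bullet θ θ')) ∧
    (∀ θ θ' θ'' : C ⊗[k] C →ₗ[k] A, D.IsV3 θ → D.IsV3 θ' → D.IsV3 θ'' →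
        D.bullet (D.bullet θ θ') θ'' = D.bullet θ (D.bullet θ' θ'')) ∧
    (∀ θ θ' : C ⊗[k] C →ₗ[k] A, D.IsV3 θ → D.IsV3 θ' → D.IsNormalizedV3 θ' →
        D.bullet θ θ' = θ) ∧
    (∀ θ : C ⊗[k] C →ₗ[k] A, D.IsV3 θ → D.IsNormalizedV3 θ →
        D.bullet θ θ = θ) := by
  refine ⟨fun θ θ' h h' => ⟨h.bullet_a h', h.bullet_b h'⟩,
    fun θ θ' θ'' _ _ _ => D.bullet_assoc θ θ' θ'',
    fun θ θ' _ _ hn => D.bullet_of_normalized θ θ' hn,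
    fun θ _ hn => D.bullet_of_normalized θ θ hn⟩
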